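/- Let V be a commutative ring and m ⊆ V an ideal satisfying m·m = m such that m̃ = m ⊗_V m is a flat V-module. Let R be a commutative V-algebra and φ : M → N an R-linear map which is an almost isomorphism (m·ker(φ) = 0 and m·coker(φ) = 0). Then for every integer p ≥ 1 the induced maps φ^{⊗p} : M^{⊗p} → N^{⊗p} on p-fold tensor powers over R, Sym^p(φ) : Sym^p_R(M) → Sym^p_R(N) on symmetric powers, and Λ^p(φ) : Λ^p_R(M) → Λ^p_R(N) on exterior powers are almost isomorphisms. -/

import Mathlib

open scoped TensorProduct

/-- The submodule of the `p`-th tensor power of `M` spanned by the differences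
`t - σ·t` for permutations `σ ∈ S_p`; the quotient by it is the `p`-th symmetric power
`Sym^p_R(M)`. -/
def symRelations (R : Type*) [CommRing R] (M : Type*) [AddCommGroup M] [Module R M]
    (p : ℕ) : Submodule R (⨂[R]^p M) :=
  Submodule.span R
    {x | ∃ (σ : Equiv.Perm (Fin p)) (t : ⨂[R]^p M),
      x = t - PiTensorProduct.reindex R (fun _ => M) σ t}

/-- The map induced on `p`-th symmetric powers by a linear map `φ : M → N`. -/
noncomputable def symPowerMap {R : Type*} [CommRing R]
    {M N : Type*} [AddCommGroup M] [Module R M] [AddCommGroup N] [Module R N]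
    (φ : M →ₗ[R] N) (p : ℕ) :
    ((⨂[R]^p M) ⧸ symRelations R M p) →ₗ[R] ((⨂[R]^p N) ⧸ symRelations R N p) :=
  Submodule.mapQ _ _ (PiTensorProduct.map fun _ => φ)
    (by
      rw [symRelations, Submodule.span_le]
      rintro x ⟨σ, t, rfl⟩
      refine SetLike.mem_coe.2 (Submodule.mem_comap.2 ?_)
      have h : PiTensorProduct.map (fun _ => φ)
            (t - PiTensorProduct.reindex R (fun _ => M) σ t) =
          PiTensorProduct.map (fun _ => φ) t -
            PiTensorProduct.reindex R (fun _ => N) σ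
              (PiTensorProduct.map (fun _ => φ) t) := by
        rw [map_sub]
        congr 1
        exact PiTensorProduct.map_reindex (fun _ => φ) σ t
      rw [h]
      exact Submodule.subset_span
        ⟨σ, PiTensorProduct.map (fun _ => φ) t, rfl⟩)

/-- The map induced on `p`-th exterior powers by a linear map `φ : M → N`. -/
noncomputable def exteriorPowerMap {R : Type*} [CommRing R]
    {M N : Type*} [AddCommGroup M] [Module R M] [AddCommGroup N] [Module R N]
    (φ : M →ₗ[R] N) (p : ℕ) :
    (⋀[R]^p M) →ₗ[R] ⋀[R]^p N :=
  (ExteriorAlgebra.map φ).toLinearMap.restrict (p := ⋀[R]^p M) (q := ⋀[R]^p N)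
    (by
      intro x hx
      have hle : Submodule.map (ExteriorAlgebra.map φ).toLinearMap (⋀[R]^p M) ≤
          ⋀[R]^p N := by
        rw [show (⋀[R]^p M : Submodule R (ExteriorAlgebra R M)) =
            LinearMap.range (ExteriorAlgebra.ι R (M := M)) ^ p from rfl,
          Submodule.map_pow]
        refine pow_le_pow_left' ?_ p
        rintro y ⟨z, ⟨w, rfl⟩, rfl⟩
        exact ⟨φ w, by simp⟩
      exact hle ⟨x, hx, rfl⟩)

/-- A linear map of modules over a `V`-algebra `R` is an almost isomorphism (w.r.t. an
ideal `m ⊆ V`) if its kernel and cokernel are killed by `m`. -/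
def IsAlmostIsomorphism (V : Type*) [CommRing V] (m : Ideal V)
    {R : Type*} [CommRing R] [Algebra V R]
    {M N : Type*} [AddCommGroup M] [Module R M] [AddCommGroup N] [Module R N]
    (φ : M →ₗ[R] N) : Prop :=
  (∀ a ∈ m, ∀ x ∈ LinearMap.ker φ, algebraMap V R a • x = 0) ∧
    (∀ a ∈ m, ∀ y : N, algebraMap V R a • y ∈ LinearMap.range φ)

namespace PowAlmost

lemma sum_sym_mem {V : Type*} [CommRing V] {ι : Type*} (I : Ideal V) (u : ι → V)
    (s : ι → ι → V) (hs : ∀ k l, s k l = s l k) (hu : ∀ k, u k * u k ∈ I)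
    (hu2 : ∀ k l, 2 * (u k * u l) ∈ I) (F : Finset ι) :
    ∑ k ∈ F, ∑ l ∈ F, s k l * (u k * u l) ∈ I := by
  classical
  induction F using Finset.induction_on with
  | empty => simp
  | insert i F hi ih =>
    rw [Finset.sum_insert hi, Finset.sum_insert hi]
    simp_rw [Finset.sum_insert hi]
    rw [Finset.sum_add_distrib]
    have h : ∑ l ∈ F, s i l * (u i * u l) + ∑ k ∈ F, s k i * (u k * u i) ∈ I := by
      rw [← Finset.sum_add_distrib]
      refine I.sum_mem fun l _ => ?_
      rw [hs l i, show s i l * (u i * u l) + s i l * (u l * u i) = s i l * (2 * (u i * u l)) by ring]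
      exact I.mul_mem_left _ (hu2 _ _)
    have h0 : s i i * (u i * u i) ∈ I := I.mul_mem_left _ (hu i)
    have := I.add_mem (I.add_mem h0 h) ih
    convert this using 1
    ring

lemma flat_mul_mem {V : Type*} [CommRing V] {P : Type*} [AddCommGroup P] [Module V P]
    [Module.Flat V P] (μ : P →ₗ[V] V) (I : Ideal V) (hI : ∀ z, μ z * μ z ∈ I)
    (x y : P) (hxy : x ⊗ₜ[V] y = y ⊗ₜ[V] x) : μ x * μ y ∈ I := by
  have hv : TensorProduct.VanishesTrivially V ![x, -y] ![y, x] := by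
    apply TensorProduct.vanishesTrivially_of_sum_tmul_eq_zero_of_rTensor_injective
    · exact Module.Flat.rTensor_preserves_injective_linearMap _ (Submodule.injective_subtype _)
    · simp [Fin.sum_univ_two, TensorProduct.neg_tmul, hxy]
  obtain ⟨κ, c, z, h1, h2⟩ := hv
  have hy : y = ∑ j, c 0 j • z j := h1 0
  have hx : x = ∑ j, c 1 j • z j := h1 1
  have h2' : ∀ j, c 0 j • x = c 1 j • y := by
    intro j
    have := h2 j
    simp only [Fin.sum_univ_two, Matrix.cons_val_zero, Matrix.cons_val_one, smul_neg] at this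
    exact (sub_eq_zero.1 (by rw [sub_eq_add_neg]; exact this))
  set X := Fintype.linearCombination V z with hX
  have hXy : X (c 0) = y := by rw [hX, Fintype.linearCombination_apply, hy]
  have hXx : X (c 1) = x := by rw [hX, Fintype.linearCombination_apply, hx]
  let d (a : Fin κ → V) : (Fin κ → V) →ₗ[V] V := Fintype.linearCombination V a
  let f : (Fin κ → V) →ₗ[V] (Fin κ → V) :=
    (d (c 0)).smulRight (c 1) - (d (c 1)).smulRight (c 0)
  have hf : X ∘ₗ f = 0 := by
    ext r
    simp [f, d, hXx, hXy, Fintype.linearCombination_apply, h2', Pi.single_apply]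
  obtain ⟨k, α, Y, hXY, hαf⟩ := Module.Flat.exists_factorization_of_comp_eq_zero_of_free hf
  have key : ∀ i j, α (c 0) i * α (c 1) j = α (c 1) i * α (c 0) j := by
    intro i j
    have hL : ∀ a : Fin κ → V, d a (fun l => α (Pi.single l 1) i) = α a i := by
      intro a
      have : a = ∑ l, a l • (Pi.single l (1 : V) : Fin κ → V) := by
        ext t; simp [Finset.sum_apply, Pi.single_apply]
      conv_rhs => rw [this]
      simp [d, Fintype.linearCombination_apply, Finsupp.finsetSum_apply, mul_comm]
    have := LinearMap.congr_fun hαf (fun l => α (Pi.single l 1) i)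
    simp only [f, LinearMap.comp_apply, LinearMap.sub_apply, LinearMap.smulRight_apply, hL,
      map_sub, map_smul, LinearMap.zero_apply] at this
    have := DFunLike.congr_fun this j
    simpa [sub_eq_zero] using this
  have hμ : ∀ a, μ (X a) = ∑ i, α a i * μ (Y (Finsupp.single i 1)) := by
    intro a
    rw [hXY, LinearMap.comp_apply]
    conv_lhs => rw [← Finsupp.sum_single (α a)]
    rw [Finsupp.sum_fintype _ _ (by simp)]
    simp only [map_sum]
    refine Finset.sum_congr rfl fun i _ => ?_
    rw [← smul_eq_mul, ← map_smul, ← map_smul]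
    simp
  rw [← hXx, ← hXy, hμ, hμ, Finset.sum_mul_sum]
  have := sum_sym_mem I (fun i => μ (Y (Finsupp.single i 1)))
    (fun i j => α (c 1) i * α (c 0) j) (fun i j => by rw [← key, mul_comm]) (fun _ => hI _) 
    (fun i j => by
      have h1 := hI (Y (Finsupp.single i 1) + Y (Finsupp.single j 1))
      have h2 := I.sub_mem (I.sub_mem h1 (hI (Y (Finsupp.single i 1)))) (hI (Y (Finsupp.single j 1)))
      convert h2 using 1
      simp only [map_add]
      ring) Finset.univ
  convert this using 1
  refine Finset.sum_congr rfl fun i _ => Finset.sum_congr rfl fun j _ => ?_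
  ring

/-- multiplication `m ⊗ m → V` -/
noncomputable def mu {V : Type*} [CommRing V] (m : Ideal V) : (m ⊗[V] m) →ₗ[V] V :=
  TensorProduct.lift ((LinearMap.mul V V).compl₁₂ m.subtype m.subtype)

@[simp] lemma mu_tmul {V : Type*} [CommRing V] (m : Ideal V) (a b : m) :
    mu m (a ⊗ₜ b) = (a : V) * b := rfl

lemma mu_comm {V : Type*} [CommRing V] (m : Ideal V) (x z : m ⊗[V] m) :
    mu m z • x = mu m x • z := by
  induction x with
  | zero => simp
  | add x x' h h' => simp only [smul_add, map_add, add_smul, h, h']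
  | tmul a b =>
    induction z with
    | zero => simp
    | add x x' h h' => simp only [smul_add, map_add, add_smul, h, h']
    | tmul c d =>
      have e1 : (c : V) • a = (a : V) • c := Subtype.ext (mul_comm _ _)
      have e2 : (d : V) • b = (b : V) • d := Subtype.ext (mul_comm _ _)
      rw [mu_tmul, mu_tmul, ← TensorProduct.smul_tmul_smul, ← TensorProduct.smul_tmul_smul, e1, e2]

lemma smul_swap {V : Type*} [CommRing V] (m : Ideal V) (x y z : m ⊗[V] m) :
    mu m z • (x ⊗ₜ[V] y) = mu m z • (y ⊗ₜ[V] x) := by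
  rw [TensorProduct.smul_tmul', mu_comm, TensorProduct.smul_tmul, mu_comm, ← TensorProduct.smul_tmul,
    mu_comm m z y, TensorProduct.smul_tmul']

lemma swap_eq {V : Type*} [CommRing V] (m : Ideal V) (hm : m * m = m) (x y : m ⊗[V] m) :
    x ⊗ₜ[V] y = y ⊗ₜ[V] x := by
  induction x with
  | zero => simp
  | add x x' h h' => rw [TensorProduct.add_tmul, TensorProduct.tmul_add, h, h']
  | tmul a b =>
    obtain ⟨a, ha⟩ := a
    have : ∃ ha : a ∈ m, ((⟨a, ha⟩ : m) ⊗ₜ[V] b) ⊗ₜ[V] y = y ⊗ₜ[V] ((⟨a, ha⟩ : m) ⊗ₜ[V] b) := by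
      have ha' : a ∈ m * m := hm.symm ▸ ha
      clear ha
      induction ha' using Submodule.mul_induction_on' with
      | mem_mul_mem e he f hf =>
        have ha : e * f ∈ m := m.mul_mem_left _ hf
        refine ⟨ha, ?_⟩
        have he' : e ∈ m * m := hm.symm ▸ he
        have h1 : (⟨e * f, ha⟩ : m) = e • ⟨f, hf⟩ := rfl
        rw [h1, ← TensorProduct.smul_tmul', ← TensorProduct.smul_tmul', TensorProduct.tmul_smul]
        clear h1 ha
        generalize (⟨f, hf⟩ : m) ⊗ₜ[V] b = w
        clear he
        induction he' using Submodule.mul_induction_on' with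
        | mem_mul_mem p hp q hq => exact smul_swap m w y (⟨p, hp⟩ ⊗ₜ ⟨q, hq⟩)
        | add p _ q _ h h' => rw [add_smul, add_smul, h, h']
      | add p _ q _ h h' =>
        obtain ⟨hp, h⟩ := h
        obtain ⟨hq, h'⟩ := h'
        refine ⟨m.add_mem hp hq, ?_⟩
        have h1 : (⟨p + q, m.add_mem hp hq⟩ : m) = ⟨p, hp⟩ + ⟨q, hq⟩ := rfl
        rw [h1, TensorProduct.add_tmul, TensorProduct.add_tmul, TensorProduct.tmul_add, h, h']
    exact this.2

lemma mu_mem {V : Type*} [CommRing V] (m : Ideal V) (x : m ⊗[V] m) : mu m x ∈ m := by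
  induction x with
  | zero => simp
  | add x x' h h' => rw [map_add]; exact m.add_mem h h'
  | tmul a b => exact m.mul_mem_left _ b.2

lemma squares {V : Type*} [CommRing V] (m : Ideal V) (hm : m * m = m)
    (hflat : Module.Flat V (m ⊗[V] m)) (I : Ideal V) (hI : ∀ c ∈ m, c * c ∈ I) : m ≤ I := by
  rw [← hm, ← hm, Submodule.mul_le]
  have h1 : ∀ x ∈ m * m, ∀ y : m ⊗[V] m, x * mu m y ∈ I := by
    intro x hx y
    induction hx using Submodule.mul_induction_on' with
    | mem_mul_mem p hp q hq =>
      exact flat_mul_mem (mu m) I (fun z => hI _ (mu_mem m z)) (⟨p, hp⟩ ⊗ₜ ⟨q, hq⟩) y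
        (swap_eq m hm _ _)
    | add p _ q _ h h' => rw [add_mul]; exact I.add_mem h h'
  intro x hx y hy
  induction hy using Submodule.mul_induction_on' with
    | mem_mul_mem p hp q hq => exact h1 x hx (⟨p, hp⟩ ⊗ₜ ⟨q, hq⟩)
    | add p _ q _ h h' => rw [mul_add]; exact I.add_mem h h'

lemma pow_le_of_prod {V : Type*} [CommRing V] (m : Ideal V) {ι : Type*} (F : Finset ι) :
    ∀ (J : Ideal V), (∀ c : ι → V, (∀ k, c k ∈ m) → ∏ k ∈ F, c k ∈ J) → m ^ F.card ≤ J := by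
  classical
  induction F using Finset.induction_on with
  | empty => intro J h; simpa [Ideal.eq_top_iff_one] using h 0 (by simp)
  | insert i F hi ih =>
    intro J h
    rw [Finset.card_insert_of_notMem hi, pow_succ', Submodule.mul_le]
    intro r hr t ht
    refine ih (Submodule.comap (LinearMap.mulLeft V r) J) (fun c hc => ?_) ht
    have := h (Function.update c i r) (fun k => by
      by_cases hk : k = i
      · subst hk; simpa
      · simpa [hk] using hc k)
    rw [Finset.prod_insert hi, Finset.prod_update_of_notMem hi] at this
    simpa using this

lemma pow_eq {V : Type*} [CommRing V] (m : Ideal V) (hm : m * m = m) (n : ℕ) : m ^ (n + 1) = m := by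
  induction n with
  | zero => simp
  | succ n ih => rw [pow_succ, ih, hm]

section main
variable {V : Type*} [CommRing V] {m : Ideal V} {R : Type*} [CommRing R] [Algebra V R]

lemma exists_inv (hm : m * m = m) {M N : Type*} [AddCommGroup M] [Module R M] [AddCommGroup N]
    [Module R N] {φ : M →ₗ[R] N} (hφ : IsAlmostIsomorphism V m φ) (c : V) (hc : c ∈ m) :
    ∃ ψ : N →ₗ[R] M, (∀ y, φ (ψ y) = algebraMap V R c • y) ∧
      (∀ x, ψ (φ x) = algebraMap V R c • x) := by
  rw [← hm] at hc
  induction hc using Submodule.mul_induction_on' with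
  | mem_mul_mem a ha b hb =>
    choose g hg using hφ.2 a ha
    have hb' : ∀ x y, φ x = φ y → algebraMap V R b • x = algebraMap V R b • y := by
      intro x y h
      rw [← sub_eq_zero, ← smul_sub]
      exact hφ.1 b hb _ (by simp [h])
    refine ⟨⟨⟨fun y => algebraMap V R b • g y, ?_⟩, ?_⟩, ?_, ?_⟩
    · intro x y
      rw [← smul_add]
      exact hb' _ _ (by simp [hg])
    · intro r x
      simp only [RingHom.id_apply]
      rw [smul_comm]
      exact hb' _ _ (by simp only [hg, map_smul]; rw [smul_comm])
    · intro y
      simp [hg, smul_smul, mul_comm]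
    · intro x
      simp only [LinearMap.coe_mk, AddHom.coe_mk]
      rw [mul_comm, map_mul, mul_smul]
      exact hb' _ _ (by simp [hg])
  | add p _ q _ h h' =>
    obtain ⟨ψ, h1, h2⟩ := h
    obtain ⟨ψ', h1', h2'⟩ := h'
    exact ⟨ψ + ψ', by simp [h1, h1', add_smul], by simp [h2, h2', add_smul]⟩

/-- The elements of `V` that multiply `y` into `S`. -/
def carry {B : Type*} [AddCommGroup B] [Module R B] (V : Type*) [CommRing V] [Algebra V R]
    (S : Submodule R B) (y : B) : Ideal V where
  carrier := {a | algebraMap V R a • y ∈ S}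
  add_mem' := by
    intro a b ha hb
    simp only [Set.mem_setOf_eq, map_add, add_smul] at *
    exact S.add_mem ha hb
  zero_mem' := by simp
  smul_mem' := by
    intro a b hb
    simp only [Set.mem_setOf_eq, smul_eq_mul, map_mul, mul_smul] at *
    exact S.smul_mem _ hb

lemma mem_carry {B : Type*} [AddCommGroup B] [Module R B] (S : Submodule R B) (y : B) (a : V) :
    a ∈ carry V S y ↔ algebraMap V R a • y ∈ S := Iff.rfl

lemma tensor_ai (hm : m * m = m) {M N : Type*} [AddCommGroup M] [Module R M] [AddCommGroup N]
    [Module R N] {φ : M →ₗ[R] N} (hφ : IsAlmostIsomorphism V m φ) (p : ℕ) (hp : 1 ≤ p) :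
    IsAlmostIsomorphism V m
        (PiTensorProduct.map (fun _ : Fin p => φ) : (⨂[R]^p M) →ₗ[R] ⨂[R]^p N) := by
  have hpow : m ^ (Finset.univ : Finset (Fin p)).card = m := by
    obtain ⟨n, rfl⟩ : ∃ n, p = n + 1 := ⟨p - 1, by omega⟩
    rw [Finset.card_univ, Fintype.card_fin, pow_eq m hm]
  choose ψ hψ1 hψ2 using exists_inv hm hφ
  constructor
  · intro a ha x hx
    have : m ≤ carry V (⊥ : Submodule R (⨂[R]^p M)) x := by
      rw [← hpow]
      refine pow_le_of_prod m _ _ fun c hc => ?_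
      rw [mem_carry, Submodule.mem_bot]
      have h1 : (PiTensorProduct.map (fun k => ψ (c k) (hc k))) ∘ₗ
          (PiTensorProduct.map (fun _ : Fin p => φ)) =
          algebraMap V R (∏ k, c k) • LinearMap.id (R := R) (M := ⨂[R]^p M) := by
        ext v
        simp [PiTensorProduct.map_tprod, hψ2, MultilinearMap.map_smul_univ]
      have h2 := LinearMap.congr_fun h1 x
      rw [LinearMap.comp_apply, LinearMap.mem_ker.1 hx, map_zero] at h2
      exact h2.symm
    exact this ha
  · intro a ha y
    have : m ≤ carry V (LinearMap.range
        (PiTensorProduct.map (fun _ : Fin p => φ) : (⨂[R]^p M) →ₗ[R] ⨂[R]^p N)) y := by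
      rw [← hpow]
      refine pow_le_of_prod m _ _ fun c hc => ?_
      rw [mem_carry]
      have h1 : (PiTensorProduct.map (fun _ : Fin p => φ)) ∘ₗ
          (PiTensorProduct.map (fun k => ψ (c k) (hc k))) =
          algebraMap V R (∏ k, c k) • LinearMap.id (R := R) (M := ⨂[R]^p N) := by
        ext v
        simp [PiTensorProduct.map_tprod, hψ1, MultilinearMap.map_smul_univ]
      exact ⟨_, LinearMap.congr_fun h1 y⟩
    exact this ha

lemma quot_ai (hm : m * m = m) {A B C D : Type*} [AddCommGroup A] [Module R A] [AddCommGroup B]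
    [Module R B] [AddCommGroup C] [Module R C] [AddCommGroup D] [Module R D]
    {T : A →ₗ[R] B} (hT : IsAlmostIsomorphism V m T) (f : A →ₗ[R] C) (g : B →ₗ[R] D)
    (S : C →ₗ[R] D) (hS : ∀ x, S (f x) = g (T x)) (hf : Function.Surjective f)
    (hg : Function.Surjective g)
    (h : ∀ a ∈ m, ∀ y ∈ LinearMap.ker g, algebraMap V R a • y ∈ (LinearMap.ker f).map T) :
    IsAlmostIsomorphism V m S := by
  constructor
  · intro a ha x hx
    obtain ⟨x, rfl⟩ := hf x
    suffices m ≤ carry V (⊥ : Submodule R C) (f x) from this ha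
    rw [← hm, Submodule.mul_le]
    intro b hb a ha
    obtain ⟨x', hx', hx''⟩ := h a ha (T x) (by rw [LinearMap.mem_ker, ← hS]; exact hx)
    have h1 := hT.1 b hb (algebraMap V R a • x - x') (by simp [hx''])
    have h2 := congrArg f h1
    rw [mem_carry, Submodule.mem_bot]
    simpa [LinearMap.mem_ker.1 hx', mul_smul] using h2
  · intro a ha y
    obtain ⟨y, rfl⟩ := hg y
    obtain ⟨x, hx⟩ := hT.2 a ha y
    exact ⟨f x, by rw [hS, hx, map_smul]⟩

lemma span_aux {B : Type*} [AddCommGroup B] [Module R B] (S : Submodule R B) (s : Set B)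
    (h : ∀ y ∈ s, m ≤ carry V S y) (a : V) (ha : a ∈ m) (y : B) (hy : y ∈ Submodule.span R s) :
    algebraMap V R a • y ∈ S := by
  have : Submodule.span R s ≤ S.comap (algebraMap V R a • LinearMap.id) :=
    Submodule.span_le.2 fun y hy => h y hy ha
  exact this hy

lemma sym_ai (hm : m * m = m) {M N : Type*} [AddCommGroup M] [Module R M] [AddCommGroup N]
    [Module R N] {φ : M →ₗ[R] N} (hφ : IsAlmostIsomorphism V m φ) (p : ℕ) (hp : 1 ≤ p) :
    IsAlmostIsomorphism V m (symPowerMap φ p) := by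
  have hT := tensor_ai hm hφ p hp
  refine quot_ai hm hT (Submodule.mkQ _) (Submodule.mkQ _) _ (fun x => rfl)
    (Submodule.mkQ_surjective _) (Submodule.mkQ_surjective _) ?_
  rw [Submodule.ker_mkQ, Submodule.ker_mkQ]
  intro a ha y hy
  refine span_aux _ _ ?_ a ha y hy
  rintro _ ⟨σ, t, rfl⟩ a ha
  obtain ⟨α, hα⟩ := hT.2 a ha t
  refine ⟨α - PiTensorProduct.reindex R (fun _ => M) σ α,
    Submodule.subset_span ⟨σ, α, rfl⟩, ?_⟩
  rw [map_sub, smul_sub, hα, ← map_smul, ← hα]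
  congr 1
  exact PiTensorProduct.map_reindex (fun _ => φ) σ α

/-- The projection from the tensor power to the exterior power. -/
noncomputable def proj (R : Type*) [CommRing R] (M : Type*) [AddCommGroup M] [Module R M] (p : ℕ) :
    (⨂[R]^p M) →ₗ[R] (⋀[R]^p M) :=
  PiTensorProduct.lift (exteriorPower.ιMulti R p (M := M)).toMultilinearMap

lemma proj_tprod (M : Type*) [AddCommGroup M] [Module R M] (p : ℕ) (v : Fin p → M) :
    proj R M p (PiTensorProduct.tprod R v) = exteriorPower.ιMulti R p v := by
  simp [proj]

lemma proj_surj (M : Type*) [AddCommGroup M] [Module R M] (p : ℕ) :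
    Function.Surjective (proj R M p) := by
  rw [← LinearMap.range_eq_top, eq_top_iff, ← exteriorPower.ιMulti_span, Submodule.span_le]
  rintro _ ⟨v, rfl⟩
  exact ⟨_, proj_tprod M p v⟩

/-- The standard relations of the exterior power. -/
def altRel (R : Type*) [CommRing R] (M : Type*) [AddCommGroup M] [Module R M] (p : ℕ) :
    Set (⨂[R]^p M) :=
  {x | ∃ (v : Fin p → M) (i j : Fin p), v i = v j ∧ i ≠ j ∧ x = PiTensorProduct.tprod R v}

lemma ker_proj (M : Type*) [AddCommGroup M] [Module R M] (p : ℕ) :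
    LinearMap.ker (proj R M p) ≤ Submodule.span R (altRel R M p) := by
  let q := (Submodule.span R (altRel R M p)).mkQ
  let F : M [⋀^Fin p]→ₗ[R] ((⨂[R]^p M) ⧸ Submodule.span R (altRel R M p)) :=
    { q.compMultilinearMap (PiTensorProduct.tprod R) with
      map_eq_zero_of_eq' := by
        intro v i j hv hij
        exact (Submodule.Quotient.mk_eq_zero _).2 (Submodule.subset_span ⟨v, i, j, hv, hij, rfl⟩) }
  have h : exteriorPower.alternatingMapLinearEquiv F ∘ₗ proj R M p = q := by
    apply PiTensorProduct.ext
    ext v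
    simp only [LinearMap.compMultilinearMap_apply, LinearMap.comp_apply]
    erw [proj_tprod, exteriorPower.alternatingMapLinearEquiv_apply_ιMulti]
    rfl
  intro x hx
  have h2 := LinearMap.congr_fun h x
  rw [LinearMap.comp_apply, LinearMap.mem_ker.1 hx, map_zero] at h2
  exact (Submodule.Quotient.mk_eq_zero _).1 h2.symm

lemma ext_ai (hm : m * m = m) (hflat : Module.Flat V (m ⊗[V] m))
    {M N : Type*} [AddCommGroup M] [Module R M] [AddCommGroup N]
    [Module R N] {φ : M →ₗ[R] N} (hφ : IsAlmostIsomorphism V m φ) (p : ℕ) (hp : 1 ≤ p) :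
    IsAlmostIsomorphism V m (exteriorPowerMap φ p) := by
  have hT := tensor_ai hm hφ p hp
  have hcomm : exteriorPowerMap φ p ∘ₗ proj R M p =
      proj R N p ∘ₗ (PiTensorProduct.map (fun _ : Fin p => φ)) := by
    apply PiTensorProduct.ext
    ext v
    simp only [LinearMap.compMultilinearMap_apply, LinearMap.comp_apply,
      PiTensorProduct.map_tprod]
    erw [proj_tprod, proj_tprod]
    exact ExteriorAlgebra.map_apply_ιMulti φ v
  refine quot_ai hm hT (proj R M p) (proj R N p) _ (LinearMap.congr_fun hcomm)
    (proj_surj M p) (proj_surj N p) ?_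
  intro a ha y hy
  refine span_aux _ _ ?_ a ha y (ker_proj N p hy)
  rintro _ ⟨w, i, j, hw, hij, rfl⟩
  choose ψ hψ1 hψ2 using exists_inv hm hφ
  set J := carry V (Submodule.map (PiTensorProduct.map (fun _ : Fin p => φ))
    (LinearMap.ker (proj R M p))) (PiTensorProduct.tprod R w) with hJ
  let F : Finset (Fin p) := (Finset.univ.erase i).erase j
  have hji : j ∈ Finset.univ.erase i := by simp [hij.symm]
  have key : ∀ d ∈ m, ∀ t ∈ m ^ F.card, d * d * t ∈ J := by
    intro d hd t ht
    refine pow_le_of_prod m F (Submodule.comap (LinearMap.mulLeft V (d * d)) J) (fun c hc => ?_) ht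
    let c' : Fin p → V := fun k => if k = i ∨ k = j then d else c k
    have hc' : ∀ k, c' k ∈ m := by
      intro k
      simp only [c']
      split_ifs
      exacts [hd, hc k]
    have hprod : d * d * ∏ k ∈ F, c k = ∏ k, c' k := by
      rw [← Finset.mul_prod_erase Finset.univ c' (Finset.mem_univ i),
        ← Finset.mul_prod_erase _ c' hji, ← mul_assoc]
      congr 1
      · simp [c']
      · refine Finset.prod_congr rfl fun k hk => ?_
        have h1 : k ≠ i ∧ k ≠ j := by simp [F] at hk; tauto
        simp [c', h1]
    rw [Submodule.mem_comap, LinearMap.mulLeft_apply, hprod, hJ, mem_carry]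
    have hcij : c' i = c' j := by simp [c']
    refine ⟨PiTensorProduct.tprod R (fun k => ψ (c' k) (hc' k) (w k)), ?_, ?_⟩
    · rw [SetLike.mem_coe, LinearMap.mem_ker, proj_tprod]
      refine AlternatingMap.map_eq_zero_of_eq _ _ ?_ hij
      simp only [hw, hcij]
    · rw [PiTensorProduct.map_tprod]
      simp only [hψ1]
      rw [MultilinearMap.map_smul_univ, map_prod]
  have h1 : m * m ^ F.card ≤ J := by
    rw [Submodule.mul_le]
    intro r hr t ht
    refine squares m hm hflat (Submodule.comap (LinearMap.mulRight V t) J) (fun c hc => ?_) hr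
    exact key c hc t ht
  rwa [← pow_succ', pow_eq m hm] at h1

end main

end PowAlmost

/-- Let `m·m = m` with `m ⊗_V m` flat, `R` a commutative `V`-algebra
and `φ : M → N` an almost isomorphism of `R`-modules.  Then for every `p ≥ 1` the
induced maps on `p`-th tensor, symmetric and exterior powers are almost
isomorphisms. -/
theorem powers_preserve_almost_isomorphisms
    (V : Type*) [CommRing V] (m : Ideal V) (hm : m * m = m)
    (hflat : Module.Flat V (TensorProduct V m m))
    (R : Type*) [CommRing R] [Algebra V R]
    (M N : Type*) [AddCommGroup M] [Module R M] [AddCommGroup N] [Module R N]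
    (φ : M →ₗ[R] N) (hφ : IsAlmostIsomorphism V m φ) :
    ∀ p : ℕ, 1 ≤ p →
      IsAlmostIsomorphism V m
        (PiTensorProduct.map (fun _ : Fin p => φ) :
          (⨂[R]^p M) →ₗ[R] ⨂[R]^p N) ∧
      IsAlmostIsomorphism V m (symPowerMap φ p) ∧
      IsAlmostIsomorphism V m (exteriorPowerMap φ p) := by
  intro p hp
  exact ⟨PowAlmost.tensor_ai hm hφ p hp, PowAlmost.sym_ai hm hφ p hp,
    PowAlmost.ext_ai hm hflat hφ p hp⟩
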